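/- For any cardinal κ the following are equivalent: (i) κ is a Kunen cardinal; (ii) every equivalent norm on ℓ¹(κ) is Ba(ℓ¹(κ)_w)-measurable; (iii) every equivalent norm on C(2^κ) is Ba(C(2^κ)_w)-measurable. -/

import Mathlib

/-- The σ-algebra on `ι × ι` generated by all rectangles `A ×ˢ B` with `A, B ⊆ ι`. -/
def productSigma (ι : Type*) : MeasurableSpace (ι × ι) :=
  MeasurableSpace.generateFrom {S : Set (ι × ι) | ∃ A B : Set ι, S = A ×ˢ B}

/-- `κ = |ι|` is a Kunen cardinal. -/
def IsKunen (ι : Type*) : Prop := productSigma ι = ⊤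

/-- The Baire σ-algebra of the weak topology of a normed space `X`. -/
def BaW (X : Type*) [NormedAddCommGroup X] [NormedSpace ℝ X] : MeasurableSpace X :=
  ⨆ φ : X →L[ℝ] ℝ, MeasurableSpace.comap φ Real.measurableSpace

/-- `N` is an equivalent norm on `X`. -/
def IsEquivNorm {X : Type*} [NormedAddCommGroup X] [NormedSpace ℝ X] (N : X → ℝ) : Prop :=
  (∀ x y : X, N (x + y) ≤ N x + N y) ∧
  (∀ (a : ℝ) (x : X), N (a • x) = |a| * N x) ∧
  ∃ c C : ℝ, 0 < c ∧ 0 < C ∧ ∀ x : X, c * ‖x‖ ≤ N x ∧ N x ≤ C * ‖x‖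

/-!
If every equivalent norm is measurable, so is every bounded seminorm `p`, because `‖·‖ + p` is an
equivalent norm. Let `l` be a bounded family of functionals biorthogonal to a family `u`. Taking
for `p` the supremum of `|l c - 2 l d|` over the pairs `(c, d)` in a set `A ⊆ ι × ι` off the
diagonal, and evaluating it at `u a - 2 u b`, exhibits `A` as a member of the product σ-algebra.

Conversely, when `ι` is Kunen every Borel set of `C(2^ι)` is weakly Baire: the identity is a random
element `F` of `C(2^ι)` with measurable point evaluations, and these determine it measurably.
Since the diagonal belongs to the product σ-algebra, countably many subsets of `ι` separate points;
hence `2^ι` is separable, and the coordinates on which `F ω` depends can be listed as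
`a 0 ω, a 1 ω, …` with each `a i` measurable. Functions of the first `n` of these coordinates
approximate `F ω`, and they depend measurably on `ω` because the power set of `ι ^ n` is the
product σ-algebra. Finally `ℓ¹(ι)` embeds isometrically into `C(2^ι)` by the Rademacher functions.
-/

open Set Filter Topology TopologicalSpace MeasureTheory

section BaireWeak

variable {X Y : Type*} [NormedAddCommGroup X] [NormedSpace ℝ X]
  [NormedAddCommGroup Y] [NormedSpace ℝ Y]

lemma measurable_BaW_clm (φ : X →L[ℝ] ℝ) : Measurable[BaW X] φ :=
  measurable_iff_comap_le.2 <|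
    le_iSup (fun φ : X →L[ℝ] ℝ => MeasurableSpace.comap φ Real.measurableSpace) φ

lemma measurable_BaW_of_clm_comp {Ω : Type*} {m : MeasurableSpace Ω} {g : Ω → X}
    (h : ∀ φ : X →L[ℝ] ℝ, Measurable fun ω => φ (g ω)) : Measurable[m, BaW X] g := by
  rw [measurable_iff_comap_le, BaW, MeasurableSpace.comap_iSup]
  refine iSup_le fun φ => ?_
  rw [MeasurableSpace.comap_comp]
  exact (h φ).comap_le

lemma borel_le_BaW_of_isInducing (T : X →L[ℝ] Y) (hT : IsInducing T)
    (hY : borel Y ≤ BaW Y) : borel X ≤ BaW X := by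
  rw [hT.eq_induced, borel_comap]
  exact (MeasurableSpace.comap_mono hY).trans
    (measurable_BaW_of_clm_comp fun φ => measurable_BaW_clm (φ.comp T)).comap_le

lemma isEquivNorm_norm : IsEquivNorm (fun x : X => ‖x‖) :=
  ⟨norm_add_le, fun a x => norm_smul a x, 1, 1, one_pos, one_pos, fun x => by simp⟩

lemma IsEquivNorm.continuous {N : X → ℝ} (hN : IsEquivNorm N) : Continuous N := by
  obtain ⟨h_add, -, _, C, -, -, h_bound⟩ := hN
  refine (LipschitzWith.of_le_add_mul' C fun x y => ?_).continuous
  calc N x = N (y + (x - y)) := by rw [add_sub_cancel]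
    _ ≤ N y + N (x - y) := h_add y (x - y)
    _ ≤ N y + C * dist x y := by
      rw [dist_eq_norm]
      gcongr
      exact (h_bound _).2

lemma IsEquivNorm.measurable {N : X → ℝ} (hN : IsEquivNorm N) (hX : borel X ≤ BaW X) :
    Measurable[BaW X] N := by
  borelize X
  exact hN.continuous.measurable.mono hX le_rfl

variable (X) in
/-- Every equivalent norm on `X` is measurable for the Baire σ-algebra of the weak topology. -/
def EquivNormsMeasurable : Prop :=
  ∀ N : X → ℝ, IsEquivNorm N → Measurable[BaW X] N

lemma EquivNormsMeasurable.measurable_seminorm (hX : EquivNormsMeasurable X)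
    {p : Seminorm ℝ X} {K : ℝ} (hp : ∀ x, p x ≤ K * ‖x‖) : Measurable[BaW X] p := by
  have h_equiv : IsEquivNorm fun x => ‖x‖ + p x := by
    refine ⟨fun x y => ?_, fun a x => ?_, 1, 1 + |K|, one_pos, by positivity, fun x => ⟨?_, ?_⟩⟩
    · linarith [norm_add_le x y, map_add_le_add p x y]
    · simp only
      rw [norm_smul, map_smul_eq_mul, Real.norm_eq_abs, mul_add]
    · linarith [apply_nonneg p x]
    · nlinarith [hp x, le_abs_self K, norm_nonneg x]
  convert (hX _ h_equiv).sub (hX _ isEquivNorm_norm) using 1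
  ext x
  simp

lemma EquivNormsMeasurable.measurableSet_exists_lt (hX : EquivNormsMeasurable X)
    {J : Type*} {φ : J → X →L[ℝ] ℝ} {K : ℝ} (hφ : ∀ j, ‖φ j‖ ≤ K) (t : ℝ) :
    MeasurableSet[BaW X] {x | ∃ j, t < |φ j x|} := by
  rcases isEmpty_or_nonempty J with hJ | hJ
  · simp
  let q : J → Seminorm ℝ X := fun j => (normSeminorm ℝ ℝ).comp (φ j).toLinearMap
  have hq (j : J) (x : X) : q j x ≤ K * ‖x‖ := (φ j).le_of_opNorm_le (hφ j) x
  have hq_bdd : BddAbove (range q) :=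
    Seminorm.bddAbove_range_iff.2 fun x => ⟨K * ‖x‖, forall_mem_range.2 fun j => hq j x⟩
  have h_sup (x : X) : (⨆ j, q j) x = ⨆ j, |φ j x| := Seminorm.iSup_apply hq_bdd
  have h_meas : Measurable[BaW X] (⨆ j, q j : Seminorm ℝ X) :=
    hX.measurable_seminorm (K := K) fun x => by
      rw [h_sup]
      exact ciSup_le fun j => hq j x
  convert h_meas (measurableSet_Ioi (a := t)) using 1
  ext x
  have h_bdd : BddAbove (range fun j => |φ j x|) := Seminorm.bddAbove_range_iff.1 hq_bdd x
  simp only [mem_ofPred_eq, mem_preimage, mem_Ioi, h_sup, lt_ciSup_iff h_bdd]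

end BaireWeak

section Kunen

variable {ι α β : Type*}

lemma productSigma_eq_prod [MeasurableSpace ι] [DiscreteMeasurableSpace ι] :
    productSigma ι = Prod.instMeasurableSpace := by
  rw [← generateFrom_prod, productSigma]
  congr 1
  ext S
  simp [mem_image2, eq_comm, MeasurableSet.of_discrete]

lemma isKunen_iff_discreteMeasurableSpace_prod [MeasurableSpace ι] [DiscreteMeasurableSpace ι] :
    IsKunen ι ↔ DiscreteMeasurableSpace (ι × ι) := by
  rw [IsKunen, productSigma_eq_prod]
  exact ⟨fun h => ⟨fun _ => h ▸ trivial⟩, fun _ => eq_top_iff.2 fun S _ => .of_discrete⟩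

lemma discreteMeasurableSpace_of_injective [MeasurableSpace α] [MeasurableSpace β]
    [DiscreteMeasurableSpace β] {f : α → β} (hf : Measurable f) (hf_inj : f.Injective) :
    DiscreteMeasurableSpace α :=
  ⟨fun A => hf_inj.preimage_image A ▸ hf .of_discrete⟩

lemma discreteMeasurableSpace_prod_of_injective [MeasurableSpace ι] [MeasurableSpace α]
    [DiscreteMeasurableSpace α] [MeasurableSpace β] [DiscreteMeasurableSpace β]
    [DiscreteMeasurableSpace (ι × ι)] {f : α → ι} {g : β → ι} (hf : f.Injective)
    (hg : g.Injective) : DiscreteMeasurableSpace (α × β) :=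
  discreteMeasurableSpace_of_injective
    ((Measurable.of_discrete (f := f)).prodMap (Measurable.of_discrete (f := g)))
    (hf.prodMap hg)

lemma discreteMeasurableSpace_fin_arrow [MeasurableSpace ι] [DiscreteMeasurableSpace ι]
    [DiscreteMeasurableSpace (ι × ι)] (n : ℕ) : DiscreteMeasurableSpace (Fin n → ι) := by
  rcases finite_or_infinite ι with hι | hι
  · infer_instance
  induction n with
  | zero => infer_instance
  | succ n ih =>
    have h_card : Cardinal.mk (Fin n → ι) ≤ Cardinal.mk ι := by
      simpa [Cardinal.mk_arrow] using Cardinal.power_nat_le (n := n) (Cardinal.aleph0_le_mk ι)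
    obtain ⟨j⟩ := (Cardinal.le_def _ _).1 h_card
    have := discreteMeasurableSpace_prod_of_injective Function.injective_id j.injective
    exact discreteMeasurableSpace_of_injective
      (MeasurableEquiv.piFinSuccAbove (fun _ => ι) 0).measurable
      (MeasurableEquiv.piFinSuccAbove (fun _ => ι) 0).injective

lemma exists_countable_separating_sections [MeasurableSpace α] [MeasurableSpace β]
    {S : Set (α × β)} (hS : MeasurableSet S) :
    ∃ 𝒜 : Set (Set α), 𝒜.Countable ∧ (∀ A ∈ 𝒜, MeasurableSet A) ∧
      ∀ a b, (∀ A ∈ 𝒜, a ∈ A ↔ b ∈ A) → ∀ c, (a, c) ∈ S ↔ (b, c) ∈ S := by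
  induction S, hS using
    MeasurableSpace.induction_on_inter generateFrom_prod.symm isPiSystem_prod with
  | empty => exact ⟨∅, by simp⟩
  | basic S hS =>
    obtain ⟨A, hA, B, -, rfl⟩ := hS
    exact ⟨{A}, by simp_all⟩
  | compl S _ ih =>
    obtain ⟨𝒜, h_count, h_meas, h⟩ := ih
    exact ⟨𝒜, h_count, h_meas, fun a b hab c => not_congr (h a b hab c)⟩
  | iUnion S _ _ ih =>
    choose 𝒜 h_count h_meas h using ih
    refine ⟨⋃ n, 𝒜 n, countable_iUnion h_count, by simpa using fun A n => h_meas n A,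
      fun a b hab c => ?_⟩
    simp only [mem_iUnion]
    exact exists_congr fun n => h n a b (fun A hA => hab A (mem_iUnion_of_mem n hA)) c

lemma countablySeparated_of_measurableEq [MeasurableSpace α] [MeasurableEq α] :
    MeasurableSpace.CountablySeparated α := by
  obtain ⟨𝒜, h_count, h_meas, h⟩ :=
    exists_countable_separating_sections (measurableSet_diagonal (α := α))
  exact ⟨⟨𝒜, h_count, h_meas, fun a _ b _ hab => (h a b hab b).2 rfl⟩⟩

variable {X : Type*} [NormedAddCommGroup X] [NormedSpace ℝ X]

lemma isKunen_of_forall_subset_offDiag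
    (h : ∀ A ⊆ (diagonal ι)ᶜ, MeasurableSet[productSigma ι] A) : IsKunen ι := by
  let _ : MeasurableSpace ι := ⊤
  rw [productSigma_eq_prod] at h
  rw [isKunen_iff_discreteMeasurableSpace_prod]
  refine ⟨fun A => ?_⟩
  have h_diag : MeasurableSet (diagonal ι) := by simpa using (h _ Subset.rfl).compl
  have h_split : A = A ∩ (diagonal ι)ᶜ ∪ diagonal ι ∩ Prod.fst ⁻¹' {a | (a, a) ∈ A} := by
    ext ⟨a, b⟩
    by_cases hab : a = b
    · subst hab; simp
    · simp [hab]
  rw [h_split]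
  exact (h _ inter_subset_right).union
    (h_diag.inter (measurable_fst MeasurableSpace.measurableSet_top))

/-- The coefficients `1, -2` are such that among all `c ≠ d` only `(c, d) = (a, b)` gives a value
of modulus greater than `4`, also when `a = b`. -/
lemma four_lt_abs_biorthogonal_iff {u : ι → X} {l : ι → X →L[ℝ] ℝ} [DecidableEq ι]
    (hlu : ∀ a b, l a (u b) = if a = b then 1 else 0) {a b c d : ι} (hcd : c ≠ d) :
    4 < |(l c - (2 : ℝ) • l d) (u a - (2 : ℝ) • u b)| ↔ c = a ∧ d = b := by
  simp only [sub_apply, smul_apply, map_sub, map_smul, hlu, smul_eq_mul]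
  split_ifs <;> simp_all <;> norm_num [abs_of_neg, abs_of_pos]

theorem isKunen_of_biorthogonal [DecidableEq ι] (hX : EquivNormsMeasurable X) {u : ι → X}
    {l : ι → X →L[ℝ] ℝ} {K : ℝ} (hl : ∀ a, ‖l a‖ ≤ K)
    (hlu : ∀ a b, l a (u b) = if a = b then 1 else 0) : IsKunen ι := by
  refine isKunen_of_forall_subset_offDiag fun A hA => ?_
  let φ : A → X →L[ℝ] ℝ := fun q => l q.1.1 - (2 : ℝ) • l q.1.2
  have hφ (q : A) : ‖φ q‖ ≤ K + 2 * K := by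
    refine (norm_sub_le _ _).trans (add_le_add (hl _) ?_)
    rw [norm_smul, Real.norm_two]
    gcongr
    exact hl _
  let _ : MeasurableSpace ι := ⊤
  have h_test : Measurable[_, BaW X] fun q : ι × ι => u q.1 - (2 : ℝ) • u q.2 := by
    refine measurable_BaW_of_clm_comp fun ψ => ?_
    simp only [map_sub, map_smul, smul_eq_mul]
    have hψu : Measurable fun a => ψ (u a) := .of_discrete
    exact (hψu.comp measurable_fst).sub ((hψu.comp measurable_snd).const_mul 2)
  rw [productSigma_eq_prod]
  convert h_test (hX.measurableSet_exists_lt hφ 4) using 1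
  ext ⟨a, b⟩
  simp only [φ, mem_preimage, mem_ofPred_eq, Subtype.exists, Prod.exists]
  constructor
  · exact fun hab => ⟨a, b, hab, (four_lt_abs_biorthogonal_iff hlu (hA hab)).2 ⟨rfl, rfl⟩⟩
  · rintro ⟨c, d, hcd, h⟩
    obtain ⟨rfl, rfl⟩ := (four_lt_abs_biorthogonal_iff hlu (hA hcd)).1 h
    exact hcd

end Kunen

section Coding

variable {ι α : Type*}

/-- The first `k` terms of the code `e a`; when `e` is injective, finitely many points of `ι` are
told apart by prefixes of some common length. -/
def prefixMap (e : ι → ℕ → α) (k : ℕ) (a : ι) : Fin k → α := fun j => e a j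

lemma exists_injOn_prefixMap {e : ι → ℕ → α} (he : e.Injective) {S : Set ι} (hS : S.Finite) :
    ∃ k, InjOn (prefixMap e k) S := by
  have h_pair (a b : ι) : ∀ᶠ k in atTop, prefixMap e k a = prefixMap e k b → a = b := by
    by_cases hab : a = b
    · exact .of_forall fun _ _ => hab
    obtain ⟨n, hn⟩ := Function.ne_iff.1 (he.ne hab)
    filter_upwards [eventually_gt_atTop n] with k hk h
    exact absurd (congrFun h ⟨n, hk⟩) hn
  have h_all : ∀ᶠ k in atTop, ∀ a ∈ S, ∀ b ∈ S, prefixMap e k a = prefixMap e k b → a = b := by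
    simp only [eventually_all_finite hS]
    exact fun a _ b _ => h_pair a b
  exact h_all.exists.imp fun k hk a ha b hb => hk a ha b hb

lemma measurable_prefixMap [MeasurableSpace ι] [MeasurableSpace α] {e : ι → ℕ → α}
    (he : Measurable e) (k : ℕ) : Measurable (prefixMap e k) :=
  measurable_pi_lambda _ fun j => (measurable_pi_apply (j : ℕ)).comp he

lemma separableSpace_arrow_bool {e : ι → ℕ → Bool} (he : e.Injective) :
    SeparableSpace (ι → Bool) := by
  let x : (Σ k, (Fin k → Bool) → Bool) → ι → Bool := fun g a => g.2 (prefixMap e g.1 a)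
  refine ⟨range x, countable_range x, dense_iff_inter_open.2 fun U hU ⟨y, hy⟩ => ?_⟩
  obtain ⟨S, V, hV, hVU⟩ := isOpen_pi_iff.1 hU y hy
  obtain ⟨k, hk⟩ := exists_injOn_prefixMap he S.finite_toSet
  let g : (Fin k → Bool) → Bool := Function.extend (fun a : S => prefixMap e k a) (fun a => y a)
    fun _ => false
  have hg (a : ι) (ha : a ∈ S) : g (prefixMap e k a) = y a :=
    (injOn_iff_injective.1 hk).extend_apply _ _ ⟨a, ha⟩
  refine ⟨x ⟨k, g⟩, hVU fun a ha => ?_, mem_range_self _⟩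
  change g (prefixMap e k a) ∈ V a
  rw [hg a ha]
  exact (hV a ha).2

end Coding

section PointwiseMeasurable

variable {Ω Z E : Type*} [MeasurableSpace Ω] [TopologicalSpace Z] [SeparableSpace Z]

lemma measurableSet_exists_mem_of_isOpen [TopologicalSpace E] [MeasurableSpace E]
    [OpensMeasurableSpace E] {G : Ω → Z → E} (hG : ∀ ω, Continuous (G ω))
    (hG_meas : ∀ z, Measurable fun ω => G ω z) {U : Set E} (hU : IsOpen U) :
    MeasurableSet {ω | ∃ z, G ω z ∈ U} := by
  obtain ⟨S, hS_count, hS⟩ := exists_countable_dense Z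
  have h_dense : {ω | ∃ z, G ω z ∈ U} = ⋃ z ∈ S, {ω | G ω z ∈ U} := by
    ext ω
    simp only [mem_ofPred_eq, mem_iUnion, exists_prop]
    exact ⟨fun ⟨z, hz⟩ => hS.exists_mem_open (hU.preimage (hG ω)) ⟨z, hz⟩,
      fun ⟨z, _, hz⟩ => ⟨z, hz⟩⟩
  rw [h_dense]
  exact .biUnion hS_count fun z _ => hG_meas z hU.measurableSet

lemma measurable_edist_continuousMap [CompactSpace Z] [PseudoMetricSpace E]
    [SecondCountableTopology E] [MeasurableSpace E] [BorelSpace E] {F G : Ω → C(Z, E)}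
    (hF : ∀ z, Measurable fun ω => F ω z) (hG : ∀ z, Measurable fun ω => G ω z) :
    Measurable fun ω => edist (F ω) (G ω) := by
  refine measurable_of_Ioi fun t => ?_
  convert measurableSet_exists_mem_of_isOpen (G := fun ω z => edist (F ω z) (G ω z))
    (fun ω => (F ω).continuous.edist (G ω).continuous) (fun z => (hF z).edist (hG z))
    (isOpen_Ioi (a := t)) using 1
  ext ω
  simp only [mem_preimage, ContinuousMap.edist_eq_iSup, mem_Ioi, lt_iSup_iff, mem_ofPred_eq]

lemma measurable_of_mem_closure_range {X Θ : Type*} [PseudoEMetricSpace X] [MeasurableSpace X]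
    [BorelSpace X] [Countable Θ] {F : Ω → X} {G : Θ → Ω → X} (hG : ∀ θ, Measurable (G θ))
    (hFG : ∀ θ, Measurable fun ω => edist (F ω) (G θ ω))
    (h_mem : ∀ ω, F ω ∈ closure (range fun θ => G θ ω)) : Measurable F := by
  refine measurable_of_isOpen fun U hU => ?_
  have h_approx : F ⁻¹' U =
      ⋃ θ, {ω | edist (F ω) (G θ ω) < Metric.infEDist (G θ ω) Uᶜ} := by
    ext ω
    simp only [mem_preimage, mem_iUnion, mem_ofPred_eq]
    constructor
    · intro hω
      have h_open : IsOpen {x | edist (F ω) x < Metric.infEDist x Uᶜ} :=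
        isOpen_lt (continuous_const.edist continuous_id) Metric.continuous_infEDist
      have h_pos : edist (F ω) (F ω) < Metric.infEDist (F ω) Uᶜ := by
        rw [edist_self, Metric.infEDist_pos_iff_notMem_closure, hU.isClosed_compl.closure_eq]
        exact not_not_intro hω
      obtain ⟨_, hx, θ, rfl⟩ := mem_closure_iff.1 (h_mem ω) _ h_open h_pos
      exact ⟨θ, hx⟩
    · rintro ⟨θ, hθ⟩
      by_contra hω
      refine hθ.not_ge ?_
      rw [edist_comm]
      exact Metric.infEDist_le_edist_of_mem hω
  rw [h_approx]
  exact .iUnion fun θ =>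
    measurableSet_lt (hFG θ) (Metric.continuous_infEDist.measurable.comp (hG θ))

end PointwiseMeasurable

section FiniteDependence

variable {ι E : Type*} [PseudoMetricSpace E]

lemma uniformity_arrow_bool_hasBasis :
    (uniformity (ι → Bool)).HasBasis (fun S : Set ι => S.Finite) fun S => {p | EqOn p.1 p.2 S} := by
  have h_unif : uniformity (ι → Bool) = ⨅ a, 𝓟 {p | p.1 a = p.2 a} := by
    simp only [Pi.uniformity, DiscreteUniformity.eq_principal_setRelId, comap_principal]
    rfl
  rw [h_unif]
  convert hasBasis_iInf_principal_finite fun a : ι => {p : (ι → Bool) × (ι → Bool) | p.1 a = p.2 a}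
  ext p
  simp [EqOn]

lemma exists_finite_dist_lt_of_eqOn (f : C(ι → Bool, E)) {δ : ℝ} (hδ : 0 < δ) :
    ∃ S : Set ι, S.Finite ∧ ∀ x y, EqOn x y S → dist (f x) (f y) < δ := by
  obtain ⟨S, hS, h⟩ := (uniformity_arrow_bool_hasBasis.uniformContinuous_iff
    Metric.uniformity_basis_dist).1
      (CompactSpace.uniformContinuous_of_continuous f.continuous) δ hδ
  exact ⟨S, hS, h⟩

end FiniteDependence

section EssentialCoordinates

variable {ι E : Type*}

/-- Changing only coordinates in `B` can move the value of `f` by more than `t`. -/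
def VariesOn [Dist E] (f : (ι → Bool) → E) (B : Set ι) (t : ℝ) : Prop :=
  ∃ x y, EqOn x y Bᶜ ∧ t < dist (f x) (f y)

/-- The coordinates that, on their own, can move the value of `f` by more than `t`. For `t = 0`
these are the coordinates on which `f` depends; for continuous `f` and `t > 0` they are finitely
many. -/
def essentialCoords [Dist E] (f : (ι → Bool) → E) (t : ℝ) : Set ι :=
  {a | VariesOn f {a} t}

lemma VariesOn.mono [Dist E] {f : (ι → Bool) → E} {B B' : Set ι} {t : ℝ}
    (h : VariesOn f B t) (hB : B ⊆ B') : VariesOn f B' t :=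
  let ⟨x, y, hxy, hlt⟩ := h
  ⟨x, y, hxy.mono (compl_subset_compl.2 hB), hlt⟩

lemma finite_essentialCoords [PseudoMetricSpace E] (f : C(ι → Bool, E)) {t : ℝ} (ht : 0 < t) :
    (essentialCoords f t).Finite := by
  obtain ⟨S, hS, h_dist⟩ := exists_finite_dist_lt_of_eqOn f ht
  refine hS.subset fun a ⟨x, y, hxy, hlt⟩ => ?_
  by_contra haS
  exact hlt.not_gt (h_dist x y (hxy.mono (subset_compl_singleton_iff.2 haS)))

lemma essentialCoords_zero_subset_iUnion [Dist E] (f : (ι → Bool) → E) :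
    essentialCoords f 0 ⊆ ⋃ m : ℕ, essentialCoords f (1 / (m + 1 : ℝ)) := by
  rintro a ⟨x, y, hxy, hlt⟩
  obtain ⟨m, hm⟩ := exists_nat_one_div_lt hlt
  exact mem_iUnion.2 ⟨m, x, y, hxy, hm⟩

lemma VariesOn.exists_mem_essentialCoords [PseudoMetricSpace E] {f : (ι → Bool) → E}
    {S B : Set ι} {t δ : ℝ} (h : VariesOn f B (t + δ)) (ht : 0 ≤ t)
    (hS : ∀ x y, EqOn x y S → dist (f x) (f y) < δ) (hSB : (S ∩ B).Subsingleton) :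
    (essentialCoords f t ∩ B).Nonempty := by
  classical
  obtain ⟨x, y, hxy, hlt⟩ := h
  obtain ⟨a, haS, haB⟩ : (S ∩ B).Nonempty := by
    by_contra h_disj
    have hxyS : EqOn x y S := hxy.mono fun b hbS hbB => h_disj ⟨b, hbS, hbB⟩
    linarith [hS x y hxyS]
  have hxS : EqOn x (Function.update y a (x a)) S := by
    intro b hbS
    by_cases hba : b = a
    · simp [hba]
    · rw [Function.update_of_ne hba]
      exact hxy fun hbB => hba (hSB ⟨hbS, hbB⟩ ⟨haS, haB⟩)
  refine ⟨a, ⟨Function.update y a (x a), y, fun b hb => Function.update_of_ne hb _ _, ?_⟩, haB⟩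
  linarith [hS _ _ hxS, dist_triangle (f x) (f (Function.update y a (x a))) (f y)]

/-- The quantifier over the uncountably many points of `B` is traded for countably many cells of
the partition into prefixes: up to a small error only finitely many coordinates matter, and long
prefixes put them into different cells. -/
lemma essentialCoords_inter_nonempty_iff [PseudoMetricSpace E] {e : ι → ℕ → Bool}
    (he : e.Injective) (f : C(ι → Bool, E)) {t : ℝ} (ht : 0 ≤ t) (B : Set ι) :
    (essentialCoords f t ∩ B).Nonempty ↔
      ∃ n : ℕ, ∀ k, ∃ s, VariesOn f (B ∩ prefixMap e k ⁻¹' {s}) (t + 1 / (n + 1 : ℝ)) := by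
  constructor
  · rintro ⟨a, ⟨x, y, hxy, hlt⟩, haB⟩
    obtain ⟨n, hn⟩ := exists_nat_one_div_lt (sub_pos.2 hlt)
    refine ⟨n, fun k => ⟨prefixMap e k a, ?_⟩⟩
    exact VariesOn.mono ⟨x, y, hxy, by linarith⟩ (singleton_subset_iff.2 ⟨haB, rfl⟩)
  · rintro ⟨n, h_varies⟩
    obtain ⟨S, hS, h_dist⟩ :=
      exists_finite_dist_lt_of_eqOn f (δ := 1 / (n + 1 : ℝ)) Nat.one_div_pos_of_nat
    obtain ⟨k, hk⟩ := exists_injOn_prefixMap he hS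
    obtain ⟨s, hs⟩ := h_varies k
    have h_sub : (S ∩ (B ∩ prefixMap e k ⁻¹' {s})).Subsingleton :=
      fun a ⟨haS, _, ha⟩ b ⟨hbS, _, hb⟩ => hk haS hbS (ha.trans hb.symm)
    obtain ⟨a, ha, haB, -⟩ := hs.exists_mem_essentialCoords ht h_dist h_sub
    exact ⟨a, ha, haB⟩

lemma eq_of_eqOn_compl_of_disjoint_essentialCoords [MetricSpace E] {f : (ι → Bool) → E}
    {T : Set ι} (hT : T.Finite) (h_disj : Disjoint T (essentialCoords f 0)) {x y : ι → Bool}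
    (hxy : EqOn x y Tᶜ) : f x = f y := by
  classical
  induction T, hT using Finite.induction_on generalizing x with
  | empty => rw [eqOn_univ x y |>.1 (by simpa using hxy)]
  | @insert a T _ _ ih =>
    obtain ⟨ha, hT⟩ := disjoint_insert_left.1 h_disj
    have h_update : f x = f (Function.update x a (y a)) := by
      by_contra h_ne
      exact ha ⟨x, _, fun b hb => (Function.update_of_ne hb _ _).symm, dist_pos.2 h_ne⟩
    rw [h_update]
    refine ih hT fun b hb => ?_
    by_cases hba : b = a
    · simp [hba]
    · rw [Function.update_of_ne hba]
      exact hxy fun h => h.elim hba hb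

lemma exists_dist_lt_of_forall_fin_eq [MetricSpace E] (f : C(ι → Bool, E)) {a : ℕ → ι}
    (ha : essentialCoords f 0 ⊆ range a) {δ : ℝ} (hδ : 0 < δ) :
    ∃ n, ∀ x y : ι → Bool, (∀ i : Fin n, x (a i) = y (a i)) → dist (f x) (f y) < δ := by
  classical
  obtain ⟨S, hS, h_dist⟩ := exists_finite_dist_lt_of_eqOn f hδ
  have h_exhaust : ∀ᶠ n in atTop, ∀ b ∈ S ∩ essentialCoords f 0, b ∈ a '' Iio n := by
    refine (eventually_all_finite (hS.inter_of_left _)).2 fun b hb => ?_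
    obtain ⟨i, rfl⟩ := ha hb.2
    filter_upwards [eventually_gt_atTop i] with n hn using mem_image_of_mem a hn
  obtain ⟨n, hn⟩ := h_exhaust.exists
  refine ⟨n, fun x y hxy => ?_⟩
  let z := (S \ essentialCoords f 0).piecewise x y
  have hzy : f z = f y := eq_of_eqOn_compl_of_disjoint_essentialCoords hS.sdiff
    disjoint_sdiff_left (piecewise_eqOn_compl _ _ _)
  have hxz : EqOn x z S := by
    intro b hbS
    by_cases hb : b ∈ essentialCoords f 0
    · obtain ⟨i, hi, rfl⟩ := hn b ⟨hbS, hb⟩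
      simpa [z, hb] using hxy ⟨i, hi⟩
    · simp [z, hbS, hb]
  rw [← hzy]
  exact h_dist x z hxz

end EssentialCoordinates

section RandomSets

variable {Ω ι : Type*} [MeasurableSpace Ω] [MeasurableSpace ι]

/-- A random set `D` is hit-measurable when the event that it meets a given measurable set is
measurable. -/
def HitMeasurable (D : Ω → Set ι) : Prop :=
  ∀ B, MeasurableSet B → MeasurableSet {ω | (D ω ∩ B).Nonempty}

lemma HitMeasurable.inter {D : Ω → Set ι} (hD : HitMeasurable D) {B : Set ι}
    (hB : MeasurableSet B) : HitMeasurable fun ω => D ω ∩ B := fun C hC => by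
  simpa only [inter_assoc] using hD _ (hB.inter hC)

lemma HitMeasurable.measurableSet_subsingleton [MeasurableSpace.CountablySeparated ι]
    {D : Ω → Set ι} (hD : HitMeasurable D) : MeasurableSet {ω | (D ω).Subsingleton} := by
  obtain ⟨e, he, he_inj⟩ :=
    MeasurableSpace.measurable_injection_nat_bool_of_countablySeparated ι
  have hB (n : ℕ) : MeasurableSet {a | e a n = true} :=
    (measurable_pi_apply n).comp he (measurableSet_singleton true)
  have h_split : {ω | (D ω).Subsingleton} =
      ⋂ n, ({ω | (D ω ∩ {a | e a n = true}).Nonempty} ∩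
        {ω | (D ω ∩ {a | e a n = true}ᶜ).Nonempty})ᶜ := by
    ext ω
    simp only [mem_ofPred_eq, mem_iInter, mem_compl_iff, mem_inter_iff, not_and]
    constructor
    · rintro h n ⟨a, ha, han⟩ ⟨b, hb, hbn⟩
      exact hbn (h ha hb ▸ han)
    · intro h a ha b hb
      by_contra hab
      obtain ⟨n, hn⟩ := Function.ne_iff.1 (he_inj.ne hab)
      cases han : e a n with
      | true => exact h n ⟨a, ha, han⟩ ⟨b, hb, by simpa [han] using hn.symm⟩
      | false => exact h n ⟨b, hb, by simpa [han] using hn.symm⟩ ⟨a, ha, by simp [han]⟩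
  rw [h_split]
  exact .iInter fun n => ((hD _ (hB n)).inter (hD _ (hB n).compl)).compl

lemma HitMeasurable.exists_measurable_selection [MeasurableSpace.CountablySeparated ι]
    [Nonempty ι] {D : Ω → Set ι} (hD : HitMeasurable D) :
    ∃ a : Ω → ι, Measurable a ∧ ∀ ω x, D ω = {x} → a ω = x := by
  classical
  let d := Classical.arbitrary ι
  let a : Ω → ι := fun ω => if h : ∃ x, D ω = {x} then h.choose else d
  have ha {ω x} (hx : D ω = {x}) : a ω = x := by
    have h : ∃ x, D ω = {x} := ⟨x, hx⟩
    exact (dif_pos h).trans (singleton_injective (h.choose_spec.symm.trans hx))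
  refine ⟨a, fun B hB => ?_, fun ω x => ha⟩
  let single : Set Ω := {ω | (D ω).Subsingleton} ∩ {ω | (D ω ∩ univ).Nonempty}
  have h_single : MeasurableSet single := hD.measurableSet_subsingleton.inter (hD _ .univ)
  have h_preimage : a ⁻¹' B = single.ite {ω | (D ω ∩ B).Nonempty} {_ω | d ∈ B} := by
    ext ω
    have h_iff : ω ∈ single ↔ ∃ x, D ω = {x} := by
      simp [single, exists_eq_singleton_iff_nonempty_subsingleton, and_comm]
    by_cases h : ∃ x, D ω = {x}
    · obtain ⟨x, hx⟩ := h
      simp [Set.ite, h_iff, hx, ha hx]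
    · simp [Set.ite, h_iff, h, a]
  rw [h_preimage]
  exact h_single.ite (hD B hB) (.const _)

lemma exists_measurable_enumeration [MeasurableSpace.CountablySeparated ι] [Nonempty ι]
    {D : ℕ → Ω → Set ι} (hD : ∀ m, HitMeasurable (D m)) (hD_fin : ∀ m ω, (D m ω).Finite) :
    ∃ a : ℕ → Ω → ι, (∀ i, Measurable (a i)) ∧ ∀ ω, ⋃ m, D m ω ⊆ range (a · ω) := by
  obtain ⟨e, he, he_inj⟩ :=
    MeasurableSpace.measurable_injection_nat_bool_of_countablySeparated ι
  have h_piece (q : ℕ × Σ k, Fin k → Bool) :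
      HitMeasurable fun ω => D q.1 ω ∩ prefixMap e q.2.1 ⁻¹' {q.2.2} :=
    (hD q.1).inter (measurable_prefixMap he _ (measurableSet_singleton _))
  choose a ha_meas ha using fun q => (h_piece q).exists_measurable_selection
  obtain ⟨q, hq⟩ := exists_surjective_nat (ℕ × Σ k, Fin k → Bool)
  refine ⟨fun i => a (q i), fun i => ha_meas _, fun ω => iUnion_subset fun m x hx => ?_⟩
  obtain ⟨k, hk⟩ := exists_injOn_prefixMap he_inj (hD_fin m ω)
  obtain ⟨i, hi⟩ := hq ⟨m, k, prefixMap e k x⟩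
  refine ⟨i, ha (q i) ω x ?_⟩
  rw [hi]
  exact Subset.antisymm (fun y ⟨hy, hyx⟩ => hk hy hx hyx) (singleton_subset_iff.2 ⟨hx, rfl⟩)

end RandomSets

section PointwiseMeasurableMaps

variable {Ω ι κ E : Type*} [MeasurableSpace Ω]

lemma measurableSet_variesOn [PseudoMetricSpace E] [SecondCountableTopology E]
    [MeasurableSpace E] [BorelSpace E] [SeparableSpace (ι → Bool)] {F : Ω → C(ι → Bool, E)}
    (hF : ∀ x, Measurable fun ω => F ω x) (B : Set ι) (t : ℝ) :
    MeasurableSet {ω | VariesOn (F ω) B t} := by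
  classical
  have h_cont : Continuous fun z : (ι → Bool) × (ι → Bool) => B.piecewise z.1 z.2 := by
    refine continuous_pi fun a => ?_
    by_cases ha : a ∈ B <;> simp only [piecewise, ha, if_true, if_false] <;> fun_prop
  convert measurableSet_exists_mem_of_isOpen
    (G := fun ω (z : (ι → Bool) × (ι → Bool)) => dist (F ω (B.piecewise z.1 z.2)) (F ω z.2))
    (fun ω => by fun_prop) (fun z => (hF _).dist (hF _)) (isOpen_Ioi (a := t)) using 1
  ext ω
  simp only [VariesOn, mem_ofPred_eq, Prod.exists, mem_Ioi]
  constructor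
  · rintro ⟨x, y, hxy, hlt⟩
    have h_self : B.piecewise x y = x := by
      rw [← eqOn_univ, eqOn_piecewise]
      exact ⟨eqOn_refl _ _, hxy.symm.mono inter_subset_right⟩
    exact ⟨x, y, by rwa [h_self]⟩
  · exact fun ⟨x, y, hlt⟩ => ⟨_, y, piecewise_eqOn_compl _ _ _, hlt⟩

lemma hitMeasurable_essentialCoords [PseudoMetricSpace E] [SecondCountableTopology E]
    [MeasurableSpace E] [BorelSpace E] [MeasurableSpace ι] {e : ι → ℕ → Bool} (he : e.Injective)
    {F : Ω → C(ι → Bool, E)} (hF : ∀ x, Measurable fun ω => F ω x) {t : ℝ} (ht : 0 ≤ t) :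
    HitMeasurable fun ω => essentialCoords (F ω) t := by
  intro B _
  have := separableSpace_arrow_bool he
  simp only [essentialCoords_inter_nonempty_iff he _ ht, ofPred_exists, ofPred_forall]
  exact .iUnion fun n => .iInter fun k => .iUnion fun s => measurableSet_variesOn hF _ _

/-- The continuous function on the cube whose value at `x` is read off the table `p` from the
coordinates of `x` listed by `g`. -/
def cylinderMap [TopologicalSpace E] [Finite κ] (g : κ → ι) (p : (κ → Bool) → E) :
    C(ι → Bool, E) where
  toFun x := p (x ∘ g)
  continuous_toFun := continuous_of_discreteTopology.comp (by fun_prop)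

lemma exists_dist_cylinderMap_lt [PseudoMetricSpace E] [Finite κ] (f : C(ι → Bool, E))
    {g : κ → ι} {δ : ℝ} (hδ : 0 < δ)
    (hf : ∀ x y : ι → Bool, (∀ i, x (g i) = y (g i)) → dist (f x) (f y) < δ)
    {Q : Set E} (hQ : Dense Q) :
    ∃ p : (κ → Bool) → Q, dist f (cylinderMap g fun s => (p s : E)) < δ + δ := by
  let lift (s : κ → Bool) : ι → Bool := Function.extend g s fun _ => false
  have h_lift (x : ι → Bool) (i : κ) : x (g i) = lift (x ∘ g) (g i) :=
    (Function.FactorsThrough.extend_apply (fun i j hij => congrArg x hij) _ i).symm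
  have h_table (s : κ → Bool) : ∃ q : Q, dist (f (lift s)) q < δ := by
    obtain ⟨q, hq, hlt⟩ := hQ.exists_dist_lt (f (lift s)) hδ
    exact ⟨⟨q, hq⟩, hlt⟩
  choose p hp using h_table
  refine ⟨p, (ContinuousMap.dist_lt_iff (by positivity)).2 fun x => ?_⟩
  exact (dist_triangle _ (f (lift (x ∘ g))) _).trans_lt (add_lt_add (hf _ _ (h_lift x)) (hp _))

lemma mem_closure_range_cylinderMap [MetricSpace E] (f : C(ι → Bool, E)) {a : ℕ → ι}
    (ha : essentialCoords f 0 ⊆ range a) {Q : Set E} (hQ : Dense Q) :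
    f ∈ closure (range fun θ : Σ n, (Fin n → Bool) → Q =>
      cylinderMap (fun i : Fin θ.1 => a i) fun s => (θ.2 s : E)) := by
  refine Metric.mem_closure_range_iff.2 fun δ hδ => ?_
  obtain ⟨n, hn⟩ := exists_dist_lt_of_forall_fin_eq f ha (half_pos hδ)
  obtain ⟨p, hp⟩ := exists_dist_cylinderMap_lt f (half_pos hδ) hn hQ
  exact ⟨⟨n, p⟩, by rwa [add_halves] at hp⟩

variable [MetricSpace E] [SecondCountableTopology E] [MeasurableSpace E] [BorelSpace E]

lemma exists_measurable_essentialCoords_subset_range [MeasurableSpace ι] [Nonempty ι]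
    [MeasurableSpace.CountablySeparated ι] {F : Ω → C(ι → Bool, E)}
    (hF : ∀ x, Measurable fun ω => F ω x) :
    ∃ a : ℕ → Ω → ι, (∀ i, Measurable (a i)) ∧ ∀ ω, essentialCoords (F ω) 0 ⊆ range (a · ω) := by
  obtain ⟨e, -, he⟩ := MeasurableSpace.measurable_injection_nat_bool_of_countablySeparated ι
  obtain ⟨a, ha_meas, ha⟩ := exists_measurable_enumeration
    (D := fun m ω => essentialCoords (F ω) (1 / (m + 1 : ℝ)))
    (fun m => hitMeasurable_essentialCoords he hF Nat.one_div_pos_of_nat.le)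
    (fun m ω => finite_essentialCoords (F ω) Nat.one_div_pos_of_nat)
  exact ⟨a, ha_meas, fun ω => (essentialCoords_zero_subset_iUnion _).trans (ha ω)⟩

theorem measurable_continuousMap_of_isKunen (hι : IsKunen ι) {F : Ω → C(ι → Bool, E)}
    (hF : ∀ x, Measurable fun ω => F ω x) : Measurable[_, borel _] F := by
  borelize C(ι → Bool, E)
  rcases isEmpty_or_nonempty ι with h_empty | h_nonempty
  · have h_const : F = fun ω => ContinuousMap.const _ (F ω default) := by
      ext ω x
      simp [Subsingleton.elim x default]
    rw [h_const]
    exact ContinuousMap.continuous_const'.measurable.comp (hF default)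
  let _ : MeasurableSpace ι := ⊤
  have := isKunen_iff_discreteMeasurableSpace_prod.1 hι
  have : MeasurableEq ι := ⟨.of_discrete⟩
  have := countablySeparated_of_measurableEq (α := ι)
  obtain ⟨e, -, he⟩ := MeasurableSpace.measurable_injection_nat_bool_of_countablySeparated ι
  have := separableSpace_arrow_bool he
  obtain ⟨a, ha_meas, ha⟩ := exists_measurable_essentialCoords_subset_range hF
  obtain ⟨Q, hQ_count, hQ⟩ := exists_countable_dense E
  have := hQ_count.to_subtype
  have h_cyl (n : ℕ) (p : (Fin n → Bool) → E) :
      Measurable fun ω => cylinderMap (fun i : Fin n => a i ω) p := by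
    have := discreteMeasurableSpace_fin_arrow (ι := ι) n
    exact (Measurable.of_discrete (f := fun g : Fin n → ι => cylinderMap g p)).comp
      (measurable_pi_lambda _ fun i => ha_meas i)
  exact measurable_of_mem_closure_range (Θ := Σ n, (Fin n → Bool) → Q) (fun θ => h_cyl θ.1 _)
    (fun θ => measurable_edist_continuousMap hF fun x =>
      (continuous_eval_const x).measurable.comp (h_cyl θ.1 _))
    (fun ω => mem_closure_range_cylinderMap (F ω) (ha ω) hQ)

theorem borel_le_BaW_continuousMap (hι : IsKunen ι) :
    borel C(ι → Bool, ℝ) ≤ BaW C(ι → Bool, ℝ) := by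
  let _ := BaW C(ι → Bool, ℝ)
  exact (measurable_continuousMap_of_isKunen hι (F := id)
    fun x => measurable_BaW_clm (ContinuousMap.evalCLM ℝ x)).le_map

end PointwiseMeasurableMaps

section Rademacher

variable {ι : Type*}

/-- The `a`-th Rademacher function on the Cantor cube: the sign `±1` given by the coordinate
`a`. -/
def rademacher (a : ι) : C(ι → Bool, ℝ) where
  toFun x := if x a then 1 else -1
  continuous_toFun :=
    (continuous_of_discreteTopology (f := fun b : Bool => if b then (1 : ℝ) else -1)).comp
      (continuous_apply a)

lemma rademacher_apply (a : ι) (x : ι → Bool) : rademacher a x = if x a then 1 else -1 := rfl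

lemma norm_rademacher_le (a : ι) : ‖rademacher a‖ ≤ 1 := by
  refine (ContinuousMap.norm_le _ zero_le_one).2 fun x => ?_
  rw [rademacher_apply]
  split_ifs <;> simp

lemma hasSum_norm_lp_one (c : lp (fun _ : ι => ℝ) 1) : HasSum (fun a => ‖c a‖) ‖c‖ := by
  simpa using lp.hasSum_norm (p := 1) (by simp) c

lemma norm_smul_rademacher_le (r : ℝ) (a : ι) : ‖r • rademacher a‖ ≤ ‖r‖ := by
  rw [norm_smul]
  exact mul_le_of_le_one_right (norm_nonneg r) (norm_rademacher_le a)

lemma summable_smul_rademacher (c : lp (fun _ : ι => ℝ) 1) :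
    Summable fun a => c a • rademacher a :=
  .of_norm_bounded (hasSum_norm_lp_one c).summable fun a => norm_smul_rademacher_le (c a) a

lemma norm_tsum_smul_rademacher (c : lp (fun _ : ι => ℝ) 1) :
    ‖∑' a, c a • rademacher a‖ = ‖c‖ := by
  apply le_antisymm
  · exact tsum_of_norm_bounded (hasSum_norm_lp_one c) fun a => norm_smul_rademacher_le (c a) a
  · let x : ι → Bool := fun a => decide (0 ≤ c a)
    have h_sign (a : ι) : (c a • rademacher a) x = ‖c a‖ := by
      by_cases ha : 0 ≤ c a
      · simp [rademacher_apply, x, ha, abs_of_nonneg]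
      · simp [rademacher_apply, x, ha, abs_of_neg (not_le.1 ha)]
    calc ‖c‖ = ∑' a, (c a • rademacher a) x := by
          simp only [h_sign, (hasSum_norm_lp_one c).tsum_eq]
      _ = (∑' a, c a • rademacher a) x :=
          ContinuousMap.tsum_apply (summable_smul_rademacher c) x
      _ ≤ ‖∑' a, c a • rademacher a‖ := ContinuousMap.apply_le_norm _ _

/-- The isometric embedding of `ℓ¹(ι)` into `C(2^ι)` sending the unit vectors to the Rademacher
functions. -/
noncomputable def rademacherEmbedding : lp (fun _ : ι => ℝ) 1 →ₗᵢ[ℝ] C(ι → Bool, ℝ) where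
  toFun c := ∑' a, c a • rademacher a
  map_add' c d := by
    simp only [lp.coeFn_add, Pi.add_apply, add_smul]
    exact (summable_smul_rademacher c).tsum_add (summable_smul_rademacher d)
  map_smul' r c := by
    simp only [lp.coeFn_smul, Pi.smul_apply, smul_assoc, RingHom.id_apply]
    exact (summable_smul_rademacher c).tsum_const_smul r
  norm_map' := norm_tsum_smul_rademacher

theorem borel_le_BaW_lp_one (hι : IsKunen ι) :
    borel (lp (fun _ : ι => ℝ) 1) ≤ BaW (lp (fun _ : ι => ℝ) 1) :=
  borel_le_BaW_of_isInducing rademacherEmbedding.toContinuousLinearMap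
    rademacherEmbedding.isometry.isEmbedding.isInducing (borel_le_BaW_continuousMap hι)

theorem isKunen_of_equivNormsMeasurable_lp_one
    (h : EquivNormsMeasurable (lp (fun _ : ι => ℝ) 1)) : IsKunen ι := by
  classical
  refine isKunen_of_biorthogonal h (u := fun a => lp.single 1 a 1)
    (l := fun a => lp.evalCLM ℝ (fun _ => ℝ) 1 a) (K := 1) (fun a => ?_) (fun a b => ?_)
  · exact LinearMap.mkContinuous_norm_le _ zero_le_one _
  · exact (lp.single_apply 1 b 1 a).trans (Pi.single_apply b 1 a)

theorem isKunen_of_equivNormsMeasurable_continuousMap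
    (h : EquivNormsMeasurable C(ι → Bool, ℝ)) : IsKunen ι := by
  classical
  let l : ι → C(ι → Bool, ℝ) →L[ℝ] ℝ := fun a => (1 / 2 : ℝ) •
    (ContinuousMap.evalCLM ℝ (Pi.single a true) - ContinuousMap.evalCLM ℝ fun _ => false)
  have hl (a : ι) : ‖l a‖ ≤ 1 := by
    refine ContinuousLinearMap.opNorm_le_bound _ zero_le_one fun f => ?_
    have h_sub : ‖f (Pi.single a true) - f fun _ => false‖ ≤ ‖f‖ + ‖f‖ :=
      (norm_sub_le _ _).trans (add_le_add (f.norm_coe_le_norm _) (f.norm_coe_le_norm _))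
    simp only [l, smul_apply, sub_apply, norm_smul, ContinuousMap.evalCLM_apply]
    rw [Real.norm_of_nonneg (by norm_num)]
    linarith
  refine isKunen_of_biorthogonal h (u := rademacher) hl fun a b => ?_
  by_cases hab : a = b
  · norm_num [l, rademacher_apply, hab]
  · simp [l, rademacher_apply, hab, Ne.symm hab]

end Rademacher

/-- For any cardinal `κ = |ι|`, the following are equivalent: (i) `κ` is a Kunen cardinal;
(ii) every equivalent norm on `ℓ¹(κ)` is `Ba(ℓ¹(κ)_w)`-measurable; (iii) every equivalent
norm on `C(2^κ)` is `Ba(C(2^κ)_w)`-measurable. -/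
theorem stmt8 (ι : Type*) :
    (IsKunen ι ↔
      ∀ N : lp (fun _ : ι => ℝ) 1 → ℝ, IsEquivNorm N →
        @Measurable _ ℝ (BaW (lp (fun _ : ι => ℝ) 1)) Real.measurableSpace N) ∧
    (IsKunen ι ↔
      ∀ N : C(ι → Bool, ℝ) → ℝ, IsEquivNorm N →
        @Measurable _ ℝ (BaW C(ι → Bool, ℝ)) Real.measurableSpace N) := by
  exact ⟨⟨fun hι N hN => hN.measurable (borel_le_BaW_lp_one hι),
      isKunen_of_equivNormsMeasurable_lp_one⟩,
    ⟨fun hι N hN => hN.measurable (borel_le_BaW_continuousMap hι),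
      isKunen_of_equivNormsMeasurable_continuousMap⟩⟩
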